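/- arXiv:2110.05051 — 4 statements merged into one kernel-verified Lean document; each statement's English description precedes it below -/
import Mathlib

section
/- Let ν ≥ 0, α > -1 and c > 0, and for k ∈ ℕ let μ_{k,0} = ∫_0^∞ x^{k+α} e^{-cx} J_ν(x) dx denote the core moments. Then for every integer k ≥ 1 the three-term recursion μ_{k+1,0} = (1/(c²+1)) · ( c·(2(k+α)+1)·μ_{k,0} − ((k+α)² − ν²)·μ_{k−1,0} ) holds. -/
open MeasureTheory

/-- Bessel function of the first kind of order `ν`, defined via its power series. -/
noncomputable def besselJ (ν x : ℝ) : ℝ :=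
  ∑' m : ℕ, (-1 : ℝ) ^ m / (m.factorial * Real.Gamma ((m : ℝ) + ν + 1)) *
    (x / 2) ^ (2 * (m : ℝ) + ν)

/-- The core moments `μ_{k,0} = ∫_0^∞ x^{k+α} e^{-cx} J_ν(x) dx`. -/
noncomputable def coreMoment (ν α c : ℝ) (k : ℕ) : ℝ :=
  ∫ x in Set.Ioi (0 : ℝ), x ^ ((k : ℝ) + α) * Real.exp (-c * x) * besselJ ν x

/-!
Write `M(ν, s) = ∫_0^∞ x^s e^{-cx} J_ν(x) dx`. Integrating the derivatives of `x^s e^{-cx} J_ν(x)`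
and `x^s e^{-cx} J_{ν+1}(x)`, and using `J_ν' = (ν/x) J_ν - J_{ν+1}` and
`J_{ν+1}' = J_ν - ((ν+1)/x) J_{ν+1}`, gives

* `(s + ν) M(ν, s-1) = c M(ν, s) + M(ν+1, s)`,
* `(s - ν - 1) M(ν+1, s-1) = c M(ν+1, s) - M(ν, s)`.

Eliminating the moments of order `ν + 1` leaves the three-term recursion. The boundary terms vanish
because `J_ν(x) = O(x^ν)` at `0`, while at infinity `J_ν` grows at most polynomially: by the two
derivative formulas, `x^{-2|ν|} (J_ν² + J_{ν+1}²)` is nonincreasing.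
-/

open Filter Topology Asymptotics Set

lemma hasDerivAt_tsum_mul_pow {𝕜 : Type*} [RCLike 𝕜] {a : ℕ → 𝕜}
    (ha : ∀ z, Summable fun n ↦ a n * z ^ n) (z : 𝕜) :
    HasDerivAt (fun w ↦ ∑' n, a n * w ^ n) (∑' n : ℕ, (n + 1) * a (n + 1) * z ^ n) z := by
  set R : ℝ := ‖z‖ + 1
  have one_le_R : 1 ≤ R := le_add_of_nonneg_left (norm_nonneg z)
  have hz : z ∈ Metric.ball 0 R := by simp [R]
  have summable_bound : Summable fun n ↦ ‖a n‖ * (2 * R) ^ n := by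
    simpa [abs_of_nonneg (zero_le_one.trans one_le_R)] using (ha ((2 * R : ℝ) : 𝕜)).norm
  have norm_deriv_le (n : ℕ) (w : 𝕜) (hw : w ∈ Metric.ball 0 R) :
      ‖a n * (n * w ^ (n - 1))‖ ≤ ‖a n‖ * (2 * R) ^ n := by
    have hwR : ‖w‖ ≤ R := (mem_ball_zero_iff.mp hw).le
    calc ‖a n * (n * w ^ (n - 1))‖ = ‖a n‖ * (n * ‖w‖ ^ (n - 1)) := by simp
      _ ≤ ‖a n‖ * (2 ^ n * R ^ n) := by
        gcongr
        · exact_mod_cast Nat.lt_two_pow_self.le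
        · exact (pow_le_pow_left₀ (norm_nonneg w) hwR _).trans
            (pow_le_pow_right₀ one_le_R (Nat.sub_le n 1))
      _ = ‖a n‖ * (2 * R) ^ n := by rw [mul_pow]
  have termwise := hasDerivAt_tsum_of_isPreconnected summable_bound Metric.isOpen_ball
    (convex_ball (0 : 𝕜) R).isPreconnected
    (fun n w _ ↦ (hasDerivAt_pow n w).const_mul (a n)) norm_deriv_le hz (ha z) hz
  have summable_deriv := Summable.of_norm_bounded summable_bound fun n ↦ norm_deriv_le n z hz
  refine termwise.congr_deriv ?_
  rw [summable_deriv.tsum_eq_zero_add]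
  simp [mul_left_comm, mul_assoc]

section BesselClifford

/-- The coefficient `1 / (m! Γ(m + ν + 1))` of the Bessel–Clifford function. At the poles of `Γ` the
convention `0⁻¹ = 0` gives the value of the entire function `1/Γ`, so every real `ν` is allowed. -/
noncomputable def besselCliffordCoeff (ν : ℝ) (m : ℕ) : ℝ :=
  (m.factorial * Real.Gamma (m + ν + 1))⁻¹

/-- The Bessel–Clifford function `C_ν`, the entire function with
`J_ν(x) = (x/2)^ν C_ν(-(x/2)²)`. -/
noncomputable def besselClifford (ν z : ℝ) : ℝ :=
  ∑' m, besselCliffordCoeff ν m * z ^ m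

lemma inv_Gamma_eq_mul_inv_Gamma_add_one (s : ℝ) :
    (Real.Gamma s)⁻¹ = s * (Real.Gamma (s + 1))⁻¹ := by
  rcases eq_or_ne s 0 with rfl | hs
  · simp
  · rw [Real.Gamma_add_one hs, mul_inv, mul_inv_cancel_left₀ hs]

lemma besselCliffordCoeff_eq_mul_order_add_one (ν : ℝ) (m : ℕ) :
    besselCliffordCoeff ν m = (m + ν + 1) * besselCliffordCoeff (ν + 1) m := by
  rw [besselCliffordCoeff, besselCliffordCoeff, mul_inv, inv_Gamma_eq_mul_inv_Gamma_add_one,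
    ← add_assoc (m : ℝ) ν 1]
  ring

lemma succ_mul_besselCliffordCoeff_succ (ν : ℝ) (m : ℕ) :
    (m + 1) * besselCliffordCoeff ν (m + 1) = besselCliffordCoeff (ν + 1) m := by
  rw [besselCliffordCoeff, besselCliffordCoeff, Nat.factorial_succ, Nat.cast_mul, Nat.cast_succ,
    add_right_comm (m : ℝ) 1 ν, ← add_assoc (m : ℝ) ν 1]
  field_simp

lemma summable_besselClifford (ν z : ℝ) :
    Summable fun m ↦ besselCliffordCoeff ν m * z ^ m := by
  refine summable_of_ratio_norm_eventually_le (r := 1 / 2) (by norm_num) ?_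
  filter_upwards [tendsto_natCast_atTop_atTop.eventually_ge_atTop (-ν),
    tendsto_natCast_atTop_atTop.eventually_ge_atTop (2 * |z|)] with m hν hz
  have coeff_ratio : besselCliffordCoeff ν m =
      (m + ν + 1) * ((m + 1) * besselCliffordCoeff ν (m + 1)) := by
    rw [succ_mul_besselCliffordCoeff_succ, ← besselCliffordCoeff_eq_mul_order_add_one]
  have ratio_ge : 2 * |z| ≤ |((m : ℝ) + ν + 1) * (m + 1)| :=
    (by nlinarith [abs_nonneg z] : 2 * |z| ≤ (m + ν + 1) * (m + 1)).trans (le_abs_self _)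
  calc ‖besselCliffordCoeff ν (m + 1) * z ^ (m + 1)‖
      = 1 / 2 * (2 * |z| * |besselCliffordCoeff ν (m + 1) * z ^ m|) := by
        simp only [Real.norm_eq_abs, abs_mul, pow_succ]
        ring
    _ ≤ 1 / 2 * (|((m : ℝ) + ν + 1) * (m + 1)| * |besselCliffordCoeff ν (m + 1) * z ^ m|) := by
        gcongr
    _ = 1 / 2 * ‖besselCliffordCoeff ν m * z ^ m‖ := by
        rw [coeff_ratio, ← abs_mul, Real.norm_eq_abs]
        ring_nf

lemma hasDerivAt_besselClifford (ν z : ℝ) :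
    HasDerivAt (besselClifford ν) (besselClifford (ν + 1) z) z := by
  have h := hasDerivAt_tsum_mul_pow (summable_besselClifford ν) z
  simp only [succ_mul_besselCliffordCoeff_succ] at h
  exact h

lemma continuous_besselClifford (ν : ℝ) : Continuous (besselClifford ν) :=
  continuous_iff_continuousAt.mpr fun z ↦ (hasDerivAt_besselClifford ν z).continuousAt

lemma besselClifford_eq_add (ν z : ℝ) :
    besselClifford ν z =
      (ν + 1) * besselClifford (ν + 1) z + z * besselClifford (ν + 1 + 1) z := by
  have hasSum_index_mul : HasSum (fun m : ℕ ↦ m * besselCliffordCoeff (ν + 1) m * z ^ m)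
      (z * besselClifford (ν + 1 + 1) z) := by
    rw [← hasSum_nat_add_iff' 1]
    simpa [pow_succ', mul_left_comm, besselClifford, succ_mul_besselCliffordCoeff_succ] using
      (summable_besselClifford (ν + 1 + 1) z).hasSum.mul_left z
  refine ((((summable_besselClifford (ν + 1) z).hasSum.mul_left (ν + 1)).add
    hasSum_index_mul).congr_fun fun m ↦ ?_).tsum_eq
  rw [besselCliffordCoeff_eq_mul_order_add_one]
  ring

end BesselClifford

section BesselJ

variable (ν : ℝ) {x : ℝ}

lemma besselJ_eq_rpow_mul_besselClifford (hx : 0 < x) :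
    besselJ ν x = (x / 2) ^ ν * besselClifford ν (-(x / 2) ^ 2) := by
  rw [besselJ, besselClifford, ← tsum_mul_left]
  refine tsum_congr fun m ↦ ?_
  rw [Real.rpow_add (half_pos hx), Real.rpow_mul (half_pos hx).le, Real.rpow_natCast,
    Real.rpow_two, neg_pow ((x / 2) ^ 2), besselCliffordCoeff]
  ring

lemma besselJ_add_besselJ_add_two (hx : 0 < x) :
    besselJ ν x + besselJ (ν + 1 + 1) x = 2 * (ν + 1) / x * besselJ (ν + 1) x := by
  simp only [besselJ_eq_rpow_mul_besselClifford _ hx, Real.rpow_add_one (half_pos hx).ne',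
    besselClifford_eq_add ν]
  field_simp
  ring

lemma hasDerivAt_besselJ (hx : 0 < x) :
    HasDerivAt (besselJ ν) (ν / x * besselJ ν x - besselJ (ν + 1) x) x := by
  have half : HasDerivAt (fun y : ℝ ↦ y / 2) (1 / 2) x := (hasDerivAt_id x).div_const 2
  have prefactor := half.rpow_const (p := ν) (.inl (half_pos hx).ne')
  have argument : HasDerivAt (fun y : ℝ ↦ -(y / 2) ^ 2) (-(x / 2)) x :=
    (half.pow 2).neg.congr_deriv (by ring)
  have series := (hasDerivAt_besselClifford ν (-(x / 2) ^ 2)).comp x argument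
  refine ((prefactor.mul series).congr_deriv ?_).congr_of_eventuallyEq ?_
  · rw [besselJ_eq_rpow_mul_besselClifford _ hx, besselJ_eq_rpow_mul_besselClifford _ hx,
      Real.rpow_sub_one (half_pos hx).ne', Real.rpow_add_one (half_pos hx).ne']
    simp only [Function.comp_apply]
    field_simp
    ring
  · filter_upwards [lt_mem_nhds hx] with y hy using besselJ_eq_rpow_mul_besselClifford ν hy

lemma hasDerivAt_besselJ_add_one (hx : 0 < x) :
    HasDerivAt (besselJ (ν + 1)) (besselJ ν x - (ν + 1) / x * besselJ (ν + 1) x) x :=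
  (hasDerivAt_besselJ (ν + 1) hx).congr_deriv <| by
    linear_combination -besselJ_add_besselJ_add_two ν hx

lemma continuousOn_besselJ : ContinuousOn (besselJ ν) (Ioi 0) :=
  fun _ hx ↦ (hasDerivAt_besselJ ν hx).continuousAt.continuousWithinAt

lemma isBigO_besselJ_nhdsGT_zero : besselJ ν =O[𝓝[>] 0] fun x ↦ x ^ ν := by
  have series_bounded : (fun x : ℝ ↦ besselClifford ν (-(x / 2) ^ 2)) =O[𝓝[>] 0]
      fun _ ↦ (1 : ℝ) := by
    have : Continuous fun x : ℝ ↦ besselClifford ν (-(x / 2) ^ 2) :=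
      (continuous_besselClifford ν).comp (by fun_prop)
    exact ((this.tendsto 0).mono_left nhdsWithin_le_nhds).isBigO_one ℝ
  have prefactor : (fun x : ℝ ↦ (x / 2) ^ ν) =O[𝓝[>] 0] fun x ↦ x ^ ν := by
    refine ((isBigO_refl (fun x : ℝ ↦ x ^ ν) _).const_mul_left (2 ^ ν)⁻¹).congr' ?_ .rfl
    filter_upwards [self_mem_nhdsWithin] with x hx
    rw [Real.div_rpow (le_of_lt hx) zero_le_two, div_eq_inv_mul]
  refine (prefactor.mul series_bounded).congr' ?_ (by simp)
  filter_upwards [self_mem_nhdsWithin] with x hx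
  exact (besselJ_eq_rpow_mul_besselClifford ν hx).symm

lemma antitoneOn_rpow_mul_besselJ_sq_add_sq :
    AntitoneOn (fun x ↦ x ^ (-2 * |ν|) * (besselJ ν x ^ 2 + besselJ (ν + 1) x ^ 2)) (Ioi 0) := by
  have deriv_eq (x : ℝ) (hx : 0 < x) : HasDerivAt
      (fun x ↦ x ^ (-2 * |ν|) * (besselJ ν x ^ 2 + besselJ (ν + 1) x ^ 2))
      (-(2 * x ^ (-2 * |ν|) / x * ((|ν| - ν) * besselJ ν x ^ 2 +
        (|ν| + ν + 1) * besselJ (ν + 1) x ^ 2))) x := by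
    have weight := Real.hasDerivAt_rpow_const (p := -2 * |ν|) (.inl hx.ne')
    have energy := ((hasDerivAt_besselJ ν hx).pow 2).add ((hasDerivAt_besselJ_add_one ν hx).pow 2)
    refine (weight.mul energy).congr_deriv ?_
    rw [Real.rpow_sub_one hx.ne']
    simp only [Pi.add_apply, Pi.pow_apply]
    field_simp
    ring
  refine antitoneOn_of_hasDerivWithinAt_nonpos (convex_Ioi 0)
    (fun x hx ↦ (deriv_eq x hx).continuousAt.continuousWithinAt)
    (fun x hx ↦ (deriv_eq x (interior_subset hx)).hasDerivWithinAt) fun x hx ↦ ?_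
  have hx : 0 < x := interior_subset hx
  have : 0 ≤ |ν| - ν := sub_nonneg.mpr (le_abs_self ν)
  have : 0 ≤ |ν| + ν + 1 := by linarith [neg_abs_le ν]
  rw [neg_nonpos]
  positivity

lemma isBigO_besselJ_atTop : besselJ ν =O[atTop] fun x ↦ x ^ |ν| := by
  refine .of_pow two_ne_zero (.of_bound (besselJ ν 1 ^ 2 + besselJ (ν + 1) 1 ^ 2) ?_)
  filter_upwards [eventually_ge_atTop 1] with x hx
  have hx₀ : 0 < x := one_pos.trans_le hx
  have energy_le := antitoneOn_rpow_mul_besselJ_sq_add_sq ν (mem_Ioi.mpr one_pos) hx₀ hx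
  simp only [Real.one_rpow, one_mul] at energy_le
  rw [show -2 * |ν| = -(|ν| * 2) by ring, Real.rpow_neg hx₀.le, Real.rpow_mul hx₀.le,
    Real.rpow_two, inv_mul_le_iff₀' (by positivity)] at energy_le
  simp only [Pi.pow_apply, norm_pow, Real.norm_eq_abs, sq_abs]
  exact (le_add_of_nonneg_right (sq_nonneg _)).trans energy_le

end BesselJ

section Moments

/-- The integrand `x^s e^{-cx} J_ν(x)` of the core moments, for an arbitrary real exponent `s`. -/
noncomputable def momentIntegrand (ν c s x : ℝ) : ℝ :=
  x ^ s * Real.exp (-c * x) * besselJ ν x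

/-- The moment `∫_0^∞ x^s e^{-cx} J_ν(x) dx` with an arbitrary real exponent `s`, so that the core
moment of index `k` is the one with `s = k + α`. -/
noncomputable def besselMoment (ν c s : ℝ) : ℝ :=
  ∫ x in Ioi 0, momentIntegrand ν c s x

variable {ν c s : ℝ}

lemma isLittleO_exp_mul_besselJ_atTop (hc : 0 < c) (b : ℝ) :
    (fun x ↦ Real.exp (-c * x) * besselJ ν x) =o[atTop] fun x ↦ x ^ b := by
  refine ((isLittleO_exp_neg_mul_rpow_atTop hc (b - |ν|)).mul_isBigO
    (isBigO_besselJ_atTop ν)).congr' .rfl ?_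
  filter_upwards [eventually_gt_atTop 0] with x hx
  rw [← Real.rpow_add hx, sub_add_cancel]

lemma isBigO_exp_mul_besselJ_nhdsGT_zero (ν c : ℝ) :
    (fun x ↦ Real.exp (-c * x) * besselJ ν x) =O[𝓝[>] 0] fun x ↦ x ^ ν := by
  have exp_bounded : (fun x ↦ Real.exp (-c * x)) =O[𝓝[>] 0] fun _ ↦ (1 : ℝ) :=
    (((by fun_prop : Continuous fun x ↦ Real.exp (-c * x)).tendsto 0).mono_left
      nhdsWithin_le_nhds).isBigO_one ℝ
  simpa using exp_bounded.mul (isBigO_besselJ_nhdsGT_zero ν)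

lemma tendsto_momentIntegrand_atTop (hc : 0 < c) (ν s : ℝ) :
    Tendsto (momentIntegrand ν c s) atTop (𝓝 0) := by
  rw [← isLittleO_one_iff ℝ]
  refine ((isBigO_refl (fun x : ℝ ↦ x ^ s) atTop).mul_isLittleO
    (isLittleO_exp_mul_besselJ_atTop (ν := ν) hc (-s))).congr' ?_ ?_
  · exact .of_forall fun x ↦ (mul_assoc _ _ _).symm
  · filter_upwards [eventually_gt_atTop 0] with x hx
    rw [← Real.rpow_add hx, add_neg_cancel, Real.rpow_zero]

lemma tendsto_momentIntegrand_nhdsGT_zero (c : ℝ) (hs : 0 < s + ν) :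
    Tendsto (momentIntegrand ν c s) (𝓝[>] 0) (𝓝 0) := by
  have rpow_tendsto : Tendsto (fun x : ℝ ↦ x ^ (s + ν)) (𝓝[>] 0) (𝓝 0) := by
    simpa [Real.zero_rpow hs.ne'] using
      ((Real.continuous_rpow_const hs.le).tendsto 0).mono_left nhdsWithin_le_nhds
  refine IsBigO.trans_tendsto ?_ rpow_tendsto
  refine ((isBigO_refl (fun x : ℝ ↦ x ^ s) _).mul
    (isBigO_exp_mul_besselJ_nhdsGT_zero ν c)).congr' ?_ ?_
  · exact .of_forall fun x ↦ (mul_assoc _ _ _).symm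
  · filter_upwards [self_mem_nhdsWithin] with x hx using (Real.rpow_add hx s ν).symm

lemma integrableOn_momentIntegrand (hc : 0 < c) (hs : -1 < s + ν) :
    IntegrableOn (momentIntegrand ν c s) (Ioi 0) := by
  have locally_integrable :
      LocallyIntegrableOn (fun x ↦ Real.exp (-c * x) * besselJ ν x) (Ioi 0) :=
    ((by fun_prop : Continuous fun x ↦ Real.exp (-c * x)).continuousOn.mul
      (continuousOn_besselJ ν)).locallyIntegrableOn measurableSet_Ioi
  have mellin := mellin_convergent_of_isBigO_scalar (s := s + 1) (b := -ν) locally_integrable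
    (isLittleO_exp_mul_besselJ_atTop hc _).isBigO (lt_add_one _)
    (by simpa using isBigO_exp_mul_besselJ_nhdsGT_zero ν c) (by linarith)
  simp only [add_sub_cancel_right, ← mul_assoc] at mellin
  exact mellin

lemma integral_eq_zero_of_hasDerivAt_momentIntegrand {f : ℝ → ℝ} (hc : 0 < c) (hs : 0 < s + ν)
    (hderiv : ∀ x ∈ Ioi 0, HasDerivAt (momentIntegrand ν c s) (f x) x)
    (hf : IntegrableOn f (Ioi 0)) : ∫ x in Ioi 0, f x = 0 := by
  have h := integral_Ioi_deriv_mul_eq_sub (v := 1) (v' := 0) hderiv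
    (fun x _ ↦ hasDerivAt_const x 1) (by simpa using hf)
    (by simpa using tendsto_momentIntegrand_nhdsGT_zero c hs)
    (by simpa using tendsto_momentIntegrand_atTop hc ν s)
  simpa using h

lemma hasDerivAt_momentIntegrand {ξ κ σ x : ℝ} (hx : 0 < x)
    (hJ : HasDerivAt (besselJ ν) (κ / x * besselJ ν x + σ * besselJ ξ x) x) (c s : ℝ) :
    HasDerivAt (momentIntegrand ν c s)
      ((s + κ) * momentIntegrand ν c (s - 1) x - c * momentIntegrand ν c s x +
        σ * momentIntegrand ξ c s x) x := by
  have power := Real.hasDerivAt_rpow_const (p := s) (.inl hx.ne')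
  have exponential := ((hasDerivAt_id x).const_mul (-c)).exp
  refine ((power.mul exponential).mul hJ).congr_deriv ?_
  simp only [momentIntegrand, Pi.mul_apply, id, Real.rpow_sub_one hx.ne']
  ring

lemma besselMoment_relation_of_hasDerivAt_besselJ {ξ κ σ : ℝ} (hc : 0 < c)
    (hν : 0 < s + ν) (hξ : -1 < s + ξ)
    (hJ : ∀ x > 0, HasDerivAt (besselJ ν) (κ / x * besselJ ν x + σ * besselJ ξ x) x) :
    (s + κ) * besselMoment ν c (s - 1) - c * besselMoment ν c s + σ * besselMoment ξ c s = 0 := by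
  have lowered : IntegrableOn (fun x ↦ (s + κ) * momentIntegrand ν c (s - 1) x) (Ioi 0) :=
    (integrableOn_momentIntegrand hc (by linarith)).const_mul _
  have damped : IntegrableOn (fun x ↦ c * momentIntegrand ν c s x) (Ioi 0) :=
    (integrableOn_momentIntegrand hc (by linarith)).const_mul _
  have neighbour : IntegrableOn (fun x ↦ σ * momentIntegrand ξ c s x) (Ioi 0) :=
    (integrableOn_momentIntegrand hc hξ).const_mul _
  have h := integral_eq_zero_of_hasDerivAt_momentIntegrand hc hν
    (fun x hx ↦ hasDerivAt_momentIntegrand hx (hJ x hx) c s) ((lowered.sub damped).add neighbour)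
  rwa [integral_add (by exact lowered.sub damped) neighbour, integral_sub lowered damped,
    integral_const_mul, integral_const_mul, integral_const_mul] at h

lemma add_mul_besselMoment_sub_one (hc : 0 < c) (hs : 0 < s + ν) :
    (s + ν) * besselMoment ν c (s - 1) = c * besselMoment ν c s + besselMoment (ν + 1) c s := by
  have h := besselMoment_relation_of_hasDerivAt_besselJ (ξ := ν + 1) (κ := ν) (σ := -1) hc hs
    (by linarith) fun x hx ↦ (hasDerivAt_besselJ ν hx).congr_deriv (by ring)
  linear_combination h

lemma sub_mul_besselMoment_add_one_sub_one (hc : 0 < c) (hs : -1 < s + ν) :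
    (s - ν - 1) * besselMoment (ν + 1) c (s - 1) =
      c * besselMoment (ν + 1) c s - besselMoment ν c s := by
  have h := besselMoment_relation_of_hasDerivAt_besselJ (κ := -(ν + 1)) (σ := 1) hc
    (by linarith) hs fun x hx ↦ (hasDerivAt_besselJ_add_one ν hx).congr_deriv (by ring)
  linear_combination h

lemma besselMoment_recurrence (hc : 0 < c) (hs : 0 < s + ν) :
    (c ^ 2 + 1) * besselMoment ν c (s + 1) =
      c * (2 * s + 1) * besselMoment ν c s - (s ^ 2 - ν ^ 2) * besselMoment ν c (s - 1) := by
  have order_up := add_mul_besselMoment_sub_one hc hs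
  have order_up_succ := add_mul_besselMoment_sub_one (s := s + 1) hc (by linarith : 0 < s + 1 + ν)
  have order_down := sub_mul_besselMoment_add_one_sub_one (s := s + 1) hc
    (by linarith : -1 < s + 1 + ν)
  rw [add_sub_cancel_right] at order_up_succ order_down
  linear_combination (s - ν) * order_up - c * order_up_succ + order_down

end Moments

theorem coreMoment_recurrence_general (ν α c : ℝ) (hc : 0 < c) (k : ℕ) (hk : 1 ≤ k)
    (hkν : 0 < (k : ℝ) + α + ν) :
    coreMoment ν α c (k + 1) =
      (1 / (c ^ 2 + 1)) *
        (c * (2 * ((k : ℝ) + α) + 1) * coreMoment ν α c k -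
          (((k : ℝ) + α) ^ 2 - ν ^ 2) * coreMoment ν α c (k - 1)) := by
  have coreMoment_eq (j : ℕ) : coreMoment ν α c j = besselMoment ν c (j + α) := rfl
  rw [coreMoment_eq, coreMoment_eq, coreMoment_eq, Nat.cast_succ, Nat.cast_pred hk,
    add_right_comm, sub_add_eq_add_sub, ← besselMoment_recurrence hc hkν, one_div,
    inv_mul_cancel_left₀ (by positivity)]

theorem coreMoment_recurrence (ν α c : ℝ) (hν : 0 ≤ ν) (hα : -1 < α) (hc : 0 < c)
    (k : ℕ) (hk : 1 ≤ k) :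
    coreMoment ν α c (k + 1) =
      (1 / (c ^ 2 + 1)) *
        (c * (2 * ((k : ℝ) + α) + 1) * coreMoment ν α c k -
          (((k : ℝ) + α) ^ 2 - ν ^ 2) * coreMoment ν α c (k - 1)) := by
  have one_le_k : (1 : ℝ) ≤ k := Nat.one_le_cast.mpr hk
  exact coreMoment_recurrence_general ν α c hc k hk (by linarith)
end

section
/- Let (μ_j)_{j≥0} be a real sequence and let k ≥ 1. Assume the Hankel determinants D_k, D_{k+1}, D_{k+2} are all nonzero, and let x^{(k+1)} = M_{k+1}^{-1} e_{k+1} and x^{(k+2)} = M_{k+2}^{-1} e_{k+2}. Then F_{k+1}/D_{k+1} − F_k/D_k = − x_{k+1}^{(k+2)} / x_{k+2}^{(k+2)} + x_k^{(k+1)} / x_{k+1}^{(k+1)}; that is, the Gaussian recurrence coefficient α_k = F_{k+1}/D_{k+1} − F_k/D_k is expressed through components of the solutions of the two linear systems. -/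
open Matrix

/-- The Hankel moment matrix `(M_m)_{ij} = μ_{i+j-2}` (1-based), i.e. `μ (i + j)` 0-based. -/
def hankelM (μ : ℕ → ℝ) (m : ℕ) : Matrix (Fin m) (Fin m) ℝ :=
  Matrix.of fun i j => μ ((i : ℕ) + (j : ℕ))

/-- The matrix `N_m` with `(N_m)_{il} = μ_{i+l-2}` for `l ≤ m-1` and `(N_m)_{im} = μ_{i+m-1}`
(1-based indices). -/
def hankelN (μ : ℕ → ℝ) (m : ℕ) : Matrix (Fin m) (Fin m) ℝ :=
  Matrix.of fun i j => if (j : ℕ) < m - 1 then μ ((i : ℕ) + (j : ℕ)) else μ ((i : ℕ) + m)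

/-!
If `A x = e_last`, multiplying by the adjugate gives `det A • x = adj A e_last`, so the components
of `x` are proportional to the cofactors of the last row of `A`. For `A = M_{m+1}` the cofactor in
the last column is `D_m` and the one in the column before is `-F_m`. Hence the quotient of the last
two components of `x` is `-F_m / D_m`, and `α_k` is a difference of two such quotients. The same
argument applies to the leading sections of any infinite array.
-/

section LinearSystems

variable {R ι : Type*} [CommRing R] [Fintype ι] [DecidableEq ι]

theorem mulVec_inv_mulVec {A : Matrix ι ι R} (hA : IsUnit A.det) (b : ι → R) :
    A *ᵥ (A⁻¹ *ᵥ b) = b := by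
  rw [mulVec_mulVec, mul_nonsing_inv _ hA, one_mulVec]

theorem det_mul_apply_eq_adjugate_of_mulVec_eq_single
    {A : Matrix ι ι R} {x : ι → R} {j : ι} (hx : A *ᵥ x = Pi.single j 1) (i : ι) :
    A.det * x i = A.adjugate i j := by
  have cofactors : A.det • x = A.adjugate.col j := by
    rw [← mulVec_single_one, ← hx, mulVec_mulVec, adjugate_mul, smul_mulVec, one_mulVec]
  exact congrFun cofactors i

theorem adjugate_last_last {n : ℕ} (A : Matrix (Fin (n + 1)) (Fin (n + 1)) R) :
    A.adjugate (Fin.last n) (Fin.last n) = (A.submatrix Fin.castSucc Fin.castSucc).det := by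
  rw [adjugate_fin_succ_eq_det_submatrix, Even.neg_one_pow (Even.add_self _), one_mul,
    Fin.succAbove_last]

theorem adjugate_castSucc_last_last {n : ℕ} (A : Matrix (Fin (n + 2)) (Fin (n + 2)) R) :
    A.adjugate (Fin.last n).castSucc (Fin.last (n + 1)) =
      -(A.submatrix Fin.castSucc (Fin.last n).castSucc.succAbove).det := by
  have sign_odd : Odd ((Fin.last (n + 1) : ℕ) + ((Fin.last n).castSucc : ℕ)) :=
    ⟨n, by simp only [Fin.val_last, Fin.val_castSucc]; ring⟩
  rw [adjugate_fin_succ_eq_det_submatrix, sign_odd.neg_one_pow, neg_one_mul, Fin.succAbove_last]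

end LinearSystems

section LeadingSections

variable {R : Type*}

/-- The leading `m × m` section of an infinite array; it is `M_m` for the Hankel array
`a i j = μ (i + j)`. -/
def leadingSection (a : ℕ → ℕ → R) (m : ℕ) : Matrix (Fin m) (Fin m) R :=
  Matrix.of fun i j => a i j

/-- The leading section of size `n + 1` with its last column, of index `n`, replaced by column
`n + 1` of the array; it is `N_{n+1}` for the Hankel array. Indexing by `n` rather than by the size
avoids a truncated subtraction. -/
def shiftedSection (a : ℕ → ℕ → R) (n : ℕ) : Matrix (Fin (n + 1)) (Fin (n + 1)) R :=
  Matrix.of fun i j => if (j : ℕ) < n then a i j else a i (n + 1)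

theorem leadingSection_submatrix_castSucc_succAbove (a : ℕ → ℕ → R) (n : ℕ) :
    (leadingSection a (n + 2)).submatrix Fin.castSucc (Fin.last n).castSucc.succAbove =
      shiftedSection a n := by
  ext i j
  induction j using Fin.lastCases with
  | last => simp [leadingSection, shiftedSection]
  | cast j => simp [leadingSection, shiftedSection, Fin.succAbove_castSucc_of_lt]

variable {K : Type*} [Field K]

theorem div_last_eq_neg_det_shiftedSection_div_det {a : ℕ → ℕ → K} {n : ℕ} {x : Fin (n + 2) → K}
    (hx : leadingSection a (n + 2) *ᵥ x = Pi.single (Fin.last (n + 1)) 1)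
    (hD : (leadingSection a (n + 1)).det ≠ 0) :
    x (Fin.last n).castSucc / x (Fin.last (n + 1)) =
      -((shiftedSection a n).det / (leadingSection a (n + 1)).det) := by
  have last_eq : (leadingSection a (n + 2)).det * x (Fin.last (n + 1)) =
      (leadingSection a (n + 1)).det :=
    (det_mul_apply_eq_adjugate_of_mulVec_eq_single hx _).trans (adjugate_last_last _)
  have prev_eq : (leadingSection a (n + 2)).det * x (Fin.last n).castSucc =
      -(shiftedSection a n).det := by
    rw [det_mul_apply_eq_adjugate_of_mulVec_eq_single hx, adjugate_castSucc_last_last,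
      leadingSection_submatrix_castSucc_succAbove]
  have det_ne_zero : (leadingSection a (n + 2)).det ≠ 0 := left_ne_zero_of_mul (last_eq ▸ hD)
  rw [← neg_div, ← prev_eq, ← last_eq, mul_div_mul_left _ _ det_ne_zero]

theorem alpha_coefficient_eq_ratio_of_solutions_general {a : ℕ → ℕ → K} {n : ℕ}
    {x : Fin (n + 3) → K} {y : Fin (n + 2) → K}
    (hx : leadingSection a (n + 3) *ᵥ x = Pi.single (Fin.last (n + 2)) 1)
    (hy : leadingSection a (n + 2) *ᵥ y = Pi.single (Fin.last (n + 1)) 1)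
    (h1 : (leadingSection a (n + 1)).det ≠ 0) (h2 : (leadingSection a (n + 2)).det ≠ 0) :
    (shiftedSection a (n + 1)).det / (leadingSection a (n + 2)).det -
        (shiftedSection a n).det / (leadingSection a (n + 1)).det =
      -x (Fin.last (n + 1)).castSucc / x (Fin.last (n + 2)) +
        y (Fin.last n).castSucc / y (Fin.last (n + 1)) := by
  rw [neg_div, div_last_eq_neg_det_shiftedSection_div_det hx h2,
    div_last_eq_neg_det_shiftedSection_div_det hy h1, neg_neg, sub_eq_add_neg]

end LeadingSections

theorem alpha_coefficient_eq_ratio_of_solutions (μ : ℕ → ℝ) (k : ℕ) (hk : 1 ≤ k)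
    (h1 : (hankelM μ k).det ≠ 0)
    (h2 : (hankelM μ (k + 1)).det ≠ 0)
    (h3 : (hankelM μ (k + 2)).det ≠ 0) :
    (hankelN μ (k + 1)).det / (hankelM μ (k + 1)).det -
        (hankelN μ k).det / (hankelM μ k).det =
      - ((hankelM μ (k + 2))⁻¹ *ᵥ Pi.single (Fin.last (k + 1)) 1) (⟨k, by omega⟩ : Fin (k + 2)) /
          ((hankelM μ (k + 2))⁻¹ *ᵥ Pi.single (Fin.last (k + 1)) 1) (Fin.last (k + 1)) +
        ((hankelM μ (k + 1))⁻¹ *ᵥ Pi.single (Fin.last k) 1) (⟨k - 1, by omega⟩ : Fin (k + 1)) /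
          ((hankelM μ (k + 1))⁻¹ *ᵥ Pi.single (Fin.last k) 1) (Fin.last k) := by
  obtain ⟨n, rfl⟩ := Nat.exists_eq_add_of_le' hk
  exact alpha_coefficient_eq_ratio_of_solutions_general (a := fun i j => μ (i + j))
    (mulVec_inv_mulVec h3.isUnit _) (mulVec_inv_mulVec h2.isUnit _) h1 h2
end

section
/- Let α > -1 and k ≥ 1. Let M_k^α ∈ ℝ^{k×k} be the matrix with entries (M_k^α)_{ij} = Γ(i+j+α−1) for 1 ≤ i,j ≤ k, and let R_k^α ∈ ℝ^{k×k} be the upper triangular matrix with (R_k^α)_{ij} = ((j−1)!/(j−i)!) · Γ(α+j) / √(Γ(i)Γ(α+i)) for i ≤ j and 0 otherwise. Then M_k^α = (R_k^α)^T R_k^α; i.e. R_k^α is the Cholesky factor of the Hankel moment matrix of the generalized Laguerre weight x^α e^{-x}. -/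
open Matrix

/-- The Hankel moment matrix of the generalized Laguerre weight `x^α e^{-x}`:
`(M_k^α)_{ij} = Γ(i+j+α−1)` (1-based indices). -/
noncomputable def lagM (α : ℝ) (k : ℕ) : Matrix (Fin k) (Fin k) ℝ :=
  Matrix.of fun i j => Real.Gamma (((i : ℕ) : ℝ) + ((j : ℕ) : ℝ) + α + 1)

/-- The upper triangular matrix `(R_k^α)_{ij} = ((j−1)!/(j−i)!) · Γ(α+j) / √(Γ(i)Γ(α+i))`
for `i ≤ j` (1-based indices), and `0` otherwise. -/
noncomputable def lagR (α : ℝ) (k : ℕ) : Matrix (Fin k) (Fin k) ℝ :=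
  Matrix.of fun i j =>
    if (i : ℕ) ≤ (j : ℕ) then
      ((j : ℕ).factorial : ℝ) / (((j : ℕ) - (i : ℕ)).factorial : ℝ) *
        Real.Gamma (α + ((j : ℕ) : ℝ) + 1) /
        Real.sqrt (Real.Gamma (((i : ℕ) : ℝ) + 1) * Real.Gamma (α + ((i : ℕ) : ℝ) + 1))
    else 0

/-!
The Chu–Vandermonde identity for falling factorials, divided by Gamma values, reads
`∑ l, C(i,l) · j(j-1)⋯(j-l+1) / Γ(α+l+1) = Γ(i+j+α+1) / (Γ(α+i+1) Γ(α+j+1))` for 0-based `i`, `j`.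
Up to the common factor `Γ(α+i+1) Γ(α+j+1)`, its `l`-th term is the product of the entries `(l,i)`
and `(l,j)` of the triangular factor.
-/

theorem descPochhammer_smeval_eq_eval {R : Type*} [Ring R] (n : ℕ) (r : R) :
    (descPochhammer ℤ n).smeval r = (descPochhammer R n).eval r := by
  rw [Polynomial.descPochhammer_smeval_eq_ascPochhammer, Polynomial.ascPochhammer_smeval_eq_eval,
    descPochhammer_eval_eq_ascPochhammer]

theorem descPochhammer_eval_add {R : Type*} [Ring R] (n : ℕ) {r s : R} (hrs : Commute r s) :
    (descPochhammer R n).eval (r + s) =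
      ∑ l ∈ Finset.range (n + 1),
        (n.choose l : R) * ((descPochhammer R l).eval r * (descPochhammer R (n - l)).eval s) := by
  simpa only [descPochhammer_smeval_eq_eval, Finset.Nat.sum_antidiagonal_eq_sum_range_succ_mk]
    using Ring.descPochhammer_smeval_add n hrs

theorem Gamma_add_natCast_eq_ascPochhammer_mul {s : ℝ} (hs : ∀ m : ℕ, s ≠ -m) (n : ℕ) :
    Real.Gamma (s + n) = (ascPochhammer ℝ n).eval s * Real.Gamma s := by
  induction n with
  | zero => simp
  | succ n ih =>
    have hsn : s + n ≠ 0 := fun h => hs n (eq_neg_of_add_eq_zero_left h)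
    rw [Nat.cast_succ, ← add_assoc, Real.Gamma_add_one hsn, ih, ascPochhammer_succ_eval]
    ring

theorem Gamma_add_natCast_eq_descPochhammer_mul {s : ℝ} (hs : ∀ m : ℕ, s ≠ -m) (n : ℕ) :
    Real.Gamma (s + n) = (descPochhammer ℝ n).eval (s + n - 1) * Real.Gamma s := by
  rw [Gamma_add_natCast_eq_ascPochhammer_mul hs, descPochhammer_eval_eq_ascPochhammer]
  ring_nf

theorem add_natCast_ne_neg_natCast {R : Type*} [Ring R] {s : R} (hs : ∀ m : ℕ, s ≠ -m) (l m : ℕ) :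
    s + l ≠ -m :=
  fun h => hs (m + l) (by rw [eq_sub_of_add_eq h, Nat.cast_add, neg_add, sub_eq_add_neg])

theorem sum_choose_mul_descPochhammer_div_Gamma {s t : ℝ} (hs : ∀ m : ℕ, s ≠ -m)
    (hst : ∀ m : ℕ, s + t ≠ -m) (n : ℕ) :
    ∑ l ∈ Finset.range (n + 1),
        (n.choose l : ℝ) * (descPochhammer ℝ l).eval t / Real.Gamma (s + l) =
      Real.Gamma (s + t + n) / (Real.Gamma (s + n) * Real.Gamma (s + t)) := by
  have gamma_ne_zero (l : ℕ) : Real.Gamma (s + l) ≠ 0 :=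
    Real.Gamma_ne_zero (add_natCast_ne_neg_natCast hs l)
  have gamma_ratio : Real.Gamma (s + t + n) / Real.Gamma (s + t) =
      (descPochhammer ℝ n).eval (t + (s + n - 1)) := by
    rw [Gamma_add_natCast_eq_descPochhammer_mul hst,
      mul_div_cancel_right₀ _ (Real.Gamma_ne_zero hst)]
    ring_nf
  rw [mul_comm, ← div_div, gamma_ratio, descPochhammer_eval_add n (Commute.all _ _), Finset.sum_div]
  refine Finset.sum_congr rfl fun l hl => ?_
  have hln : l ≤ n := Finset.mem_range_succ_iff.mp hl
  have gamma_top : Real.Gamma (s + n) =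
      (descPochhammer ℝ (n - l)).eval (s + n - 1) * Real.Gamma (s + l) := by
    simpa only [Nat.cast_sub hln, add_assoc, add_sub_cancel] using
      Gamma_add_natCast_eq_descPochhammer_mul (add_natCast_ne_neg_natCast hs l) (n - l)
  rw [div_eq_div_iff (gamma_ne_zero l) (gamma_ne_zero n), gamma_top]
  ring

theorem sum_choose_mul_descFactorial_div_Gamma {s : ℝ} (hs : ∀ m : ℕ, s ≠ -m) {i N : ℕ}
    (hiN : i < N) (j : ℕ) :
    ∑ l ∈ Finset.range N, (i.choose l : ℝ) * (j.descFactorial l : ℝ) / Real.Gamma (s + l) =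
      Real.Gamma (s + j + i) / (Real.Gamma (s + i) * Real.Gamma (s + j)) := by
  rw [← sum_choose_mul_descPochhammer_div_Gamma hs (add_natCast_ne_neg_natCast hs j)]
  simp only [descPochhammer_eval_eq_descFactorial]
  refine (Finset.sum_subset (Finset.range_subset_range.mpr hiN) fun l _ hl => ?_).symm
  have hil : i < l := by simpa using hl
  rw [Nat.choose_eq_zero_of_lt hil, Nat.cast_zero, zero_mul, zero_div]

theorem lagR_apply_eq_descFactorial (α : ℝ) (k : ℕ) (l j : Fin k) :
    lagR α k l j = ((j : ℕ).descFactorial l : ℝ) * Real.Gamma (α + 1 + (j : ℕ)) /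
      √(Real.Gamma ((l : ℕ) + 1) * Real.Gamma (α + 1 + (l : ℕ))) := by
  simp only [lagR, Matrix.of_apply, add_right_comm α _ (1 : ℝ)]
  split_ifs with hlj
  · rw [← Nat.factorial_mul_descFactorial hlj, Nat.cast_mul,
      mul_div_cancel_left₀ _ (Nat.cast_ne_zero.mpr (Nat.factorial_ne_zero _))]
  · rw [Nat.descFactorial_of_lt (not_le.mp hlj), Nat.cast_zero, zero_mul, zero_div]

theorem lagR_mul_lagR {α : ℝ} (hα : -1 < α) (k : ℕ) (l i j : Fin k) :
    lagR α k l i * lagR α k l j =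
      Real.Gamma (α + 1 + (i : ℕ)) * Real.Gamma (α + 1 + (j : ℕ)) *
        (((i : ℕ).choose l : ℝ) * ((j : ℕ).descFactorial l : ℝ) /
          Real.Gamma (α + 1 + (l : ℕ))) := by
  have gamma_pos : 0 < Real.Gamma (α + 1 + (l : ℕ)) :=
    Real.Gamma_pos_of_pos (by linarith [(l : ℕ).cast_nonneg (α := ℝ)])
  rw [lagR_apply_eq_descFactorial, lagR_apply_eq_descFactorial, div_mul_div_comm,
    Real.Gamma_nat_eq_factorial, Real.mul_self_sqrt (by positivity),
    Nat.descFactorial_eq_factorial_mul_choose (i : ℕ) l]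
  push_cast
  field_simp

theorem lagM_cholesky (α : ℝ) (hα : -1 < α) (k : ℕ) (hk : 1 ≤ k) :
    lagM α k = (lagR α k)ᵀ * lagR α k := by
  ext i j
  have hs (m : ℕ) : α + 1 ≠ -m := by linarith [m.cast_nonneg (α := ℝ)]
  have gamma_ne_zero (n : ℕ) : Real.Gamma (α + 1 + n) ≠ 0 :=
    Real.Gamma_ne_zero (add_natCast_ne_neg_natCast hs n)
  calc lagM α k i j
      = Real.Gamma (α + 1 + (j : ℕ) + (i : ℕ)) := by
        rw [lagM, Matrix.of_apply]
        ring_nf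
    _ = Real.Gamma (α + 1 + (i : ℕ)) * Real.Gamma (α + 1 + (j : ℕ)) *
          ∑ l ∈ Finset.range k, ((i : ℕ).choose l : ℝ) * ((j : ℕ).descFactorial l : ℝ) /
            Real.Gamma (α + 1 + l) := by
        rw [sum_choose_mul_descFactorial_div_Gamma hs i.isLt,
          mul_div_cancel₀ _ (mul_ne_zero (gamma_ne_zero i) (gamma_ne_zero j))]
    _ = ∑ l : Fin k, lagR α k l i * lagR α k l j := by
        simp only [Finset.sum_range, Finset.mul_sum, lagR_mul_lagR hα]
    _ = ((lagR α k)ᵀ * lagR α k) i j := rfl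
end

section
/- Let α > -1 and k ≥ 1. Let R_k^α ∈ ℝ^{k×k} be the upper triangular matrix with (R_k^α)_{ij} = ((j−1)!/(j−i)!) · Γ(α+j) / √(Γ(i)Γ(α+i)) for i ≤ j and 0 otherwise. Then R_k^α is invertible and its inverse is the upper triangular matrix with entries ((R_k^α)^{-1})_{ij} = (−1)^{i+j} √( (j−1)! Γ(α+j) ) / ( (j−i)! Γ(i) Γ(α+i) ) for i ≤ j and 0 otherwise. -/
open Matrix

/-- The claimed inverse of `R_k^α`: the upper triangular matrix with entries
`(−1)^{i+j} √((j−1)! Γ(α+j)) / ((j−i)! Γ(i) Γ(α+i))` for `i ≤ j` (1-based), `0` otherwise. -/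
noncomputable def lagRinv (α : ℝ) (k : ℕ) : Matrix (Fin k) (Fin k) ℝ :=
  Matrix.of fun i j =>
    if (i : ℕ) ≤ (j : ℕ) then
      (-1 : ℝ) ^ ((i : ℕ) + (j : ℕ)) *
        Real.sqrt (((j : ℕ).factorial : ℝ) * Real.Gamma (α + ((j : ℕ) : ℝ) + 1)) /
        ((((j : ℕ) - (i : ℕ)).factorial : ℝ) * Real.Gamma (((i : ℕ) : ℝ) + 1) *
          Real.Gamma (α + ((i : ℕ) : ℝ) + 1))
    else 0

/-!
Put `w i = i! Γ(α + i + 1)` (0-based `i`). Then `R = D(√w)⁻¹ T D(w)` with `T` the upper triangular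
Toeplitz matrix with symbol `exp X`, and the claimed inverse is `D(w)⁻¹ T' D(√w)` with `T'` the one
with symbol `exp (-X)`. Passing to Toeplitz matrices turns products of power series into products of
matrices, so `exp X * exp (-X) = 1` gives `T * T' = 1`.
-/

open PowerSeries Finset.HasAntidiagonal

section UpperToeplitz

variable {S : Type*} [Semiring S] {k : ℕ}

/-- The `k × k` upper triangular Toeplitz matrix whose `n`-th superdiagonal is constantly the
`n`-th coefficient of the symbol `f`. It is the matrix of multiplication by `f` on power series
modulo `X ^ k`, acting on row vectors of coefficients. -/
noncomputable def upperToeplitz (k : ℕ) (f : S⟦X⟧) : Matrix (Fin k) (Fin k) S :=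
  Matrix.of fun i j => if i ≤ j then coeff ((j : ℕ) - i) f else 0

lemma upperToeplitz_apply (f : S⟦X⟧) (i j : Fin k) :
    upperToeplitz k f i j = if i ≤ j then coeff ((j : ℕ) - i) f else 0 :=
  rfl

lemma upperToeplitz_one : upperToeplitz k (1 : S⟦X⟧) = 1 := by
  ext i j
  rw [upperToeplitz_apply, coeff_one, Matrix.one_apply]
  grind

lemma sum_Icc_fin_eq_sum_antidiagonal {M : Type*} [AddCommMonoid M] {i j : Fin k} (hij : i ≤ j)
    (F : ℕ × ℕ → M) :
    ∑ l ∈ Finset.Icc i j, F ((l : ℕ) - i, (j : ℕ) - l) =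
      ∑ p ∈ antidiagonal ((j : ℕ) - i), F p := by
  refine Finset.sum_bij (fun l _ => ((l : ℕ) - i, (j : ℕ) - l)) ?_ ?_ ?_ fun _ _ => rfl
  · grind [mem_antidiagonal]
  · grind
  · rintro ⟨a, b⟩ hab
    rw [mem_antidiagonal] at hab
    refine ⟨⟨i + a, by grind⟩, ?_, ?_⟩
    · grind [Fin.le_def]
    · grind

lemma upperToeplitz_mul (f g : S⟦X⟧) :
    upperToeplitz k (f * g) = upperToeplitz k f * upperToeplitz k g := by
  ext i j
  have sum_eq_sum_Icc : ∑ l, upperToeplitz k f i l * upperToeplitz k g l j =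
      ∑ l ∈ Finset.Icc i j, coeff ((l : ℕ) - i) f * coeff ((j : ℕ) - l) g := by
    rw [← Finset.filter_le_le_eq_Icc, Finset.sum_filter]
    refine Finset.sum_congr rfl fun l _ => ?_
    simp only [upperToeplitz_apply, ite_zero_mul_ite_zero]
  rw [Matrix.mul_apply, sum_eq_sum_Icc, upperToeplitz_apply]
  split_ifs with hij
  · rw [coeff_mul, sum_Icc_fin_eq_sum_antidiagonal hij fun p => coeff p.1 f * coeff p.2 g]
  · rw [Finset.Icc_eq_empty hij, Finset.sum_empty]

end UpperToeplitz

lemma upperToeplitz_exp_mul_upperToeplitz_exp_neg (A : Type*) [CommRing A] [Algebra ℚ A] (k : ℕ) :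
    upperToeplitz k (exp A) * upperToeplitz k (evalNegHom (exp A)) = 1 := by
  rw [← upperToeplitz_mul, exp_mul_exp_neg_eq_one, upperToeplitz_one]

lemma diagonal_inv_mul_mul_diagonal_mul_eq_one {n K : Type*} [Fintype n] [DecidableEq n]
    [DivisionRing K] {a b : n → K} (ha : ∀ i, a i ≠ 0) (hb : ∀ i, b i ≠ 0) {A B : Matrix n n K}
    (hAB : A * B = 1) :
    diagonal (fun i => (a i)⁻¹) * A * diagonal b *
      (diagonal (fun i => (b i)⁻¹) * B * diagonal a) = 1 := by
  have diagonal_b_mul_inv : diagonal b * diagonal (fun i => (b i)⁻¹) = 1 := by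
    simp [hb]
  have diagonal_a_inv_mul : diagonal (fun i => (a i)⁻¹) * diagonal a = 1 := by
    simp [ha]
  calc
    _ = diagonal (fun i => (a i)⁻¹) *
          (A * (diagonal b * diagonal (fun i => (b i)⁻¹)) * B) * diagonal a := by
      simp only [Matrix.mul_assoc]
    _ = 1 := by
      rw [diagonal_b_mul_inv, Matrix.mul_one, hAB, Matrix.mul_one, diagonal_a_inv_mul]

/-- The weights `w i = i! Γ(α + i + 1)`, that is `Γ(i) Γ(α + i)` in 1-based indexing. Up to
diagonal scalings by `w` and `√w`, `lagR` does not depend on `α`. -/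
noncomputable def lagWeight (α : ℝ) (i : ℕ) : ℝ :=
  (i.factorial : ℝ) * Real.Gamma (α + i + 1)

lemma lagWeight_pos {α : ℝ} (hα : -1 < α) (i : ℕ) : 0 < lagWeight α i :=
  mul_pos (by positivity) (Real.Gamma_pos_of_pos (by linarith [i.cast_nonneg (α := ℝ)]))

lemma lagR_eq_diagonal_mul_upperToeplitz_mul_diagonal (α : ℝ) (k : ℕ) :
    lagR α k = diagonal (fun i : Fin k => (√(lagWeight α i))⁻¹) * upperToeplitz k (exp ℝ) *
      diagonal (fun j : Fin k => lagWeight α j) := by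
  ext i j
  rw [mul_diagonal, diagonal_mul, upperToeplitz_apply]
  simp only [lagR, lagWeight, of_apply, Fin.val_fin_le, Real.Gamma_nat_eq_factorial]
  split_ifs
  · rw [coeff_exp]
    push_cast
    ring
  · ring

lemma lagRinv_eq_diagonal_mul_upperToeplitz_mul_diagonal (α : ℝ) (k : ℕ) :
    lagRinv α k = diagonal (fun i : Fin k => (lagWeight α i)⁻¹) *
      upperToeplitz k (evalNegHom (exp ℝ)) * diagonal (fun j : Fin k => √(lagWeight α j)) := by
  ext i j
  rw [mul_diagonal, diagonal_mul, upperToeplitz_apply]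
  simp only [lagRinv, lagWeight, of_apply, Fin.val_fin_le, Real.Gamma_nat_eq_factorial]
  split_ifs with hij
  · have neg_one_pow_sub : (-1 : ℝ) ^ ((j : ℕ) - i) = (-1) ^ ((i : ℕ) + j) :=
      neg_one_pow_congr (by grind)
    rw [evalNegHom, coeff_rescale, coeff_exp, neg_one_pow_sub]
    push_cast
    ring
  · ring

lemma lagR_mul_lagRinv {α : ℝ} (hα : -1 < α) (k : ℕ) : lagR α k * lagRinv α k = 1 := by
  rw [lagR_eq_diagonal_mul_upperToeplitz_mul_diagonal,
    lagRinv_eq_diagonal_mul_upperToeplitz_mul_diagonal]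
  exact diagonal_inv_mul_mul_diagonal_mul_eq_one
    (fun i : Fin k => (Real.sqrt_pos.2 (lagWeight_pos hα i)).ne')
    (fun i : Fin k => (lagWeight_pos hα i).ne')
    (upperToeplitz_exp_mul_upperToeplitz_exp_neg ℝ k)

theorem lagR_inverse (α : ℝ) (hα : -1 < α) (k : ℕ) (hk : 1 ≤ k) :
    IsUnit (lagR α k) ∧ (lagR α k)⁻¹ = lagRinv α k := by
  have h := lagR_mul_lagRinv hα k
  exact ⟨IsUnit.of_mul_eq_one _ h, Matrix.inv_eq_right_inv h⟩
end
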